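/- Let n ≥ 2 and let G be an almost controllable graph on Fin n with twins τ < τ′ such that the (τ,n)-cofactor of W(G) equals ±2^{⌊n/2⌋−1}·b for an odd, square-free, positive integer b. Let Q be a rational regular orthogonal n×n matrix such that Qᵀ·A(G)·Q is the adjacency matrix of some graph, and let p be an odd prime dividing the level ℓ(Q). Suppose there exists a vector y ∈ 𝔽_pⁿ with W(G)ᵀy = 0 and (A(G) − λ₁(G)·I)y ≠ 0 over 𝔽_p. Then there exists an integer vector x with x ≢ 0 (mod p) such that every entry of Ŵ(G)ᵀ·x is divisible by p². -/

import Mathlib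

/-!
Write `e` for the all-ones vector, `α` for the twin vector and `Ŵ` for the matrix whose columns are
`e, Ae, …, Aⁿe, α` (the graph has `n + 2` vertices); `λ₁` is the eigenvalue of `α`.

The rows of the walk matrix at the twins agree, so `det Ŵ` is `-2` times the `τ`-cofactor
(`det_hatW`) and `p²` does not divide it. Since `det (adj Ŵ)` is a power of `det Ŵ`, the adjugate of
`Ŵ` does not vanish modulo `p` (`adjugate_mod_ne_zero`), and the kernels of `Ŵ` and `Ŵᵀ` over `𝔽_p`
are at most lines. The vector `z = y - (αᵀy / 2) α` is nonzero and spans the kernel of `Ŵᵀ`; as this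
kernel is stable under `A`, `z` is an eigenvector of `A` over `𝔽_p`, and by the hypothesis on `y` its
eigenvalue `λ₀` differs from `λ₁` (`exists_eigenvector`).

Let `U = ℓQ` with `ℓ = pm` the level, and `B = QᵀAQ`, so that `AU = UB` and `UᵀU = ℓ²`. A column `u`
of `U` satisfies `(Aᵏe)ᵀu = ℓ (Bᵏe)_j`, `uᵀu = ℓ²` and `uᵀAu = ℓ² B_jj`, which all vanish modulo
`p`; this forces `u` to be a multiple of `z` modulo `p`. In particular `Ŵᵀu = p w` with `w`
integral, and `u` may be chosen nonzero modulo `p`. It remains to solve `Ŵᵀv = w` over `𝔽_p`: then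
`x = u - p v` is a solution.

This linear system is solvable as soon as `w` is orthogonal to the kernel of `Ŵ`. Over `𝔽_p` write
`χ_A = χ_B = (X - λ₀)(X - λ₁) q`. If `z` is a left eigenvector of `M` for `λ` with `zᵀv = 0`, then
the matrix `M + w'zᵀ` with `zᵀw' = 1` acts on `v` and its iterates as `M` does, while its
characteristic polynomial is `χ_M - χ_M / (X - λ)`; Cayley–Hamilton for both matrices gives
`(χ_M / (X - λ))(M) v = 0` (`aeval_mulVec_eq_zero_of_charpoly`). Two distinct eigenvalues of this
kind remove both linear factors (`aeval_mulVec_eq_zero_of_two`). With `z` and `α` this yields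
`q(A) e = 0`, so the coefficients of `q` span the kernel of `Ŵ`. If `p ∤ m`, then a nonzero row of
`U` and the integral vector `αᵀU / p`, whose squared length is `2m²`, play the same role for `B`
and yield `q(B) e = 0`. As `w` has entries `m (Bᵏe)_j` for `k ≤ n`, it is orthogonal to the
coefficient vector of `q` in every case.
-/

open Matrix

namespace AlmostControllableGraphs

variable {n : ℕ}

/-- The all-ones vector. -/
def eVec (m : ℕ) : Fin m → ℤ := fun _ => 1

/-- The walk matrix `W(G) = [e, Ae, A²e, …, A^{n-1}e]` (columns indexed by `Fin (n+2)`). -/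
def walkMatrix (A : Matrix (Fin (n + 2)) (Fin (n + 2)) ℤ) :
    Matrix (Fin (n + 2)) (Fin (n + 2)) ℤ :=
  Matrix.of fun i j => ((A ^ (j : ℕ)) *ᵥ eVec (n + 2)) i

/-- `G` is almost controllable if its walk matrix has rank `n - 1` over `ℚ`. -/
def IsAlmostControllable (A : Matrix (Fin (n + 2)) (Fin (n + 2)) ℤ) : Prop :=
  ((walkMatrix A).map ((↑) : ℤ → ℚ)).rank = n + 1

/-- The matrix `V = [e, Ae, …, A^{n-2}e]`, the first `n - 1` columns of the walk matrix. -/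
def Vmat (A : Matrix (Fin (n + 2)) (Fin (n + 2)) ℤ) :
    Matrix (Fin (n + 2)) (Fin (n + 1)) ℤ :=
  Matrix.of fun i j => walkMatrix A i j.castSucc

/-- The matrix obtained from `V` by deleting row `i`. -/
def Xmat (A : Matrix (Fin (n + 2)) (Fin (n + 2)) ℤ) (i : Fin (n + 2)) :
    Matrix (Fin (n + 1)) (Fin (n + 1)) ℤ :=
  Matrix.of fun r c => Vmat A (i.succAbove r) c

/-- The `(i, n)`-cofactor of the walk matrix: `(−1)^{n+i}` times the determinant of the
matrix obtained by deleting row `i` and the last column from `W(G)`.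
(In 0-based indexing the sign is `(−1)^{i + (n-1)}`.) -/
def cofactorLast (A : Matrix (Fin (n + 2)) (Fin (n + 2)) ℤ) (i : Fin (n + 2)) : ℤ :=
  (-1 : ℤ) ^ ((i : ℕ) + (n + 1)) * (Xmat A i).det

/-- The vector `ξ(G)` of last-column cofactors of the walk matrix. -/
def xiVec (A : Matrix (Fin (n + 2)) (Fin (n + 2)) ℤ) : Fin (n + 2) → ℤ :=
  fun i => cofactorLast A i

/-- The rational scalar `2^{1 - ⌊n/2⌋}`. -/
def twoPow (n : ℕ) : ℚ := (2 : ℚ) ^ ((1 : ℤ) - (((n + 2) / 2 : ℕ) : ℤ))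

/-- The matrix `W_δ(G) = [e, Ae, …, A^{n-2}e, (−1)^δ·2^{1-⌊n/2⌋}·ξ(G)]`. -/
def Wdelta (A : Matrix (Fin (n + 2)) (Fin (n + 2)) ℤ) (δ : ℕ) :
    Matrix (Fin (n + 2)) (Fin (n + 2)) ℚ :=
  Matrix.of fun i j =>
    if (j : ℕ) = n + 1 then (-1 : ℚ) ^ δ * twoPow n * (xiVec A i : ℚ)
    else ((walkMatrix A i j : ℤ) : ℚ)

/-- A matrix is regular orthogonal if it is orthogonal and has all row sums equal to 1. -/
def IsRegularOrthogonal {K : Type*} [Field K] {m : ℕ} (Q : Matrix (Fin m) (Fin m) K) : Prop :=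
  Qᵀ * Q = 1 ∧ Q *ᵥ (fun _ => (1 : K)) = fun _ => 1

/-- Adjacency matrix of the complement graph. -/
def complMat (A : Matrix (Fin (n + 2)) (Fin (n + 2)) ℤ) :
    Matrix (Fin (n + 2)) (Fin (n + 2)) ℤ :=
  Matrix.of fun i j => if i = j then 0 else 1 - A i j

/-- Two graphs are generalized cospectral if they are cospectral and so are their complements. -/
def GenCospectral (A B : Matrix (Fin (n + 2)) (Fin (n + 2)) ℤ) : Prop :=
  A.charpoly = B.charpoly ∧ (complMat A).charpoly = (complMat B).charpoly

/-- `τ` and `τ'` are twins: the transposition swapping them is an automorphism. -/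
def IsTwinPair (A : Matrix (Fin (n + 2)) (Fin (n + 2)) ℤ) (τ τ' : Fin (n + 2)) : Prop :=
  ∀ i j, A (Equiv.swap τ τ' i) (Equiv.swap τ τ' j) = A i j

/-- `λ₁(G) = −1` if the twins are adjacent and `0` otherwise; for a 0-1 matrix this
is `−A τ τ'`. -/
def lam1 (A : Matrix (Fin (n + 2)) (Fin (n + 2)) ℤ) (τ τ' : Fin (n + 2)) : ℤ :=
  -(A τ τ')

/-- The vector `α(G)` with entry `−1` at `τ`, `1` at `τ'`, and `0` elsewhere. -/
def alphaVec (τ τ' : Fin (n + 2)) : Fin (n + 2) → ℤ :=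
  fun i => if i = τ then -1 else if i = τ' then 1 else 0

/-- The reduction of `α(G)` modulo `p`. -/
def alphaVecMod (p : ℕ) (τ τ' : Fin (n + 2)) : Fin (n + 2) → ZMod p :=
  fun i => ((alphaVec τ τ' i : ℤ) : ZMod p)

/-- The matrix `Ŵ(G) = [e, Ae, …, A^{n-2}e, α(G)]`. -/
def hatW (A : Matrix (Fin (n + 2)) (Fin (n + 2)) ℤ) (τ τ' : Fin (n + 2)) :
    Matrix (Fin (n + 2)) (Fin (n + 2)) ℤ :=
  Matrix.of fun i j => if (j : ℕ) = n + 1 then alphaVec τ τ' i else walkMatrix A i j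

/-- The level of a rational matrix: the smallest positive integer `ℓ` such that `ℓQ` is
an integer matrix. -/
noncomputable def level {m : ℕ} (Q : Matrix (Fin m) (Fin m) ℚ) : ℕ :=
  sInf {k : ℕ | 0 < k ∧ ∀ i j, ((k : ℚ) * Q i j).den = 1}

/-- A permutation matrix. -/
def IsPermMatrix {m : ℕ} (Q : Matrix (Fin m) (Fin m) ℚ) : Prop :=
  ∃ σ : Equiv.Perm (Fin m), ∀ i j, Q i j = if σ i = j then 1 else 0

/-- `G` is determined by its generalized spectrum: every graph generalized cospectral with
`G` is isomorphic to `G`. -/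
def IsDGS (A : Matrix (Fin (n + 2)) (Fin (n + 2)) ℤ) : Prop :=
  ∀ B : Matrix (Fin (n + 2)) (Fin (n + 2)) ℤ, B.IsAdjMatrix → GenCospectral A B →
    ∃ σ : Equiv.Perm (Fin (n + 2)), ∀ i j, B i j = A (σ i) (σ j)


/-! ### Eigenvectors, annihilating polynomials and corank one -/

section
open Polynomial
variable {m F : Type*} [Fintype m] [DecidableEq m] [Field F]

lemma exists_dotProduct_eq_one {z : m → F} (hz : z ≠ 0) : ∃ w : m → F, w ⬝ᵥ z = 1 := by
  obtain ⟨i, hi⟩ := Function.ne_iff.mp hz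
  exact ⟨Pi.single i (z i)⁻¹, by simpa using inv_mul_cancel₀ hi⟩

/-- If `z` is a left eigenvector of `M` for `lam` and `w` pairs to `1` with it, then adding `w zᵀ` to
`M` turns one eigenvalue `lam` into `lam + 1`. The identity `(X - lam) (X - M - w zᵀ) =
(X - lam - w zᵀ) (X - M)` gives this on taking determinants. -/
lemma charpoly_add_vecMulVec (M : Matrix m m F) (w z : m → F) (lam : F)
    (hzM : z ᵥ* M = lam • z) (hwz : w ⬝ᵥ z = 1) :
    (X - C lam) * (M + vecMulVec w z).charpoly = (X - C lam - 1) * M.charpoly := by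
  have hne : Nonempty m := by
    by_contra h
    rw [not_nonempty_iff] at h
    simp [dotProduct] at hwz
  have hmap : (vecMulVec w z).map C = vecMulVec (fun i => C (w i)) (fun i => C (z i)) := by
    ext i j : 2
    simp [vecMulVec_apply]
  have hvec : (fun i => C (z i)) ᵥ* M.map C = (C lam : F[X]) • fun i => C (z i) := by
    ext j : 1
    have := congrArg C (congrFun hzM j)
    simpa [vecMul, dotProduct, map_sum] using this
  have hmat : (X - C lam : F[X]) • charmatrix (M + vecMulVec w z) =
      (scalar m (X - C lam : F[X]) - (vecMulVec w z).map C) * charmatrix M := by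
    have h2 : charmatrix (M + vecMulVec w z) = charmatrix M - (vecMulVec w z).map C := by
      ext i j : 2
      simp [charmatrix_apply]; ring
    have h3 : (vecMulVec w z).map C * charmatrix M =
        (X - C lam : F[X]) • (vecMulVec w z).map C := by
      rw [hmap, vecMulVec_mul, charmatrix, vecMul_sub]
      simp only [RingHom.mapMatrix_apply]
      rw [hvec]
      refine Matrix.ext fun i j => ?_
      simp only [vecMulVec_apply, Matrix.smul_apply, smul_eq_mul, Pi.sub_apply, Pi.smul_apply,
        scalar_apply, vecMul_diagonal]
      ring
    rw [h2, sub_mul, h3, smul_sub]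
    congr 1
    ext i j : 2
    simp
  have hdet := congrArg det hmat
  rw [det_smul, det_mul] at hdet
  have hrank : (scalar m (X - C lam : F[X]) - (vecMulVec w z).map C).det =
      (X - C lam) ^ Fintype.card m - (X - C lam) ^ (Fintype.card m - 1) := by
    rw [← eval_charpoly, hmap, charpoly_vecMulVec]
    have : (fun i => C (w i)) ⬝ᵥ (fun i => C (z i)) = (1 : F[X]) := by
      rw [← C_1, ← hwz]; simp [dotProduct, map_sum]
    rw [this]; simp
  rw [hrank] at hdet
  obtain ⟨k, hk⟩ : ∃ k, Fintype.card m = k + 1 := ⟨_, (Nat.succ_pred Fintype.card_ne_zero).symm⟩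
  rw [hk, Nat.add_sub_cancel] at hdet
  have h0 : (X - C lam : F[X]) ^ k ≠ 0 := pow_ne_zero _ (X_sub_C_ne_zero lam)
  apply mul_left_cancel₀ h0
  simp only [charpoly]
  linear_combination hdet

/-- A left eigenvector orthogonal to `v` removes its linear factor from the characteristic polynomial
as an annihilator of `v`, even when the eigenvalue is a multiple root. The matrices `M` and
`M + w zᵀ` agree on the Krylov space of `v`, so their characteristic polynomials, whose difference
is `r`, both annihilate `v`. -/
lemma aeval_mulVec_eq_zero_of_charpoly (M : Matrix m m F) (z v : m → F) (lam : F) (hz : z ≠ 0)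
    (hzM : z ᵥ* M = lam • z) (hzv : z ⬝ᵥ v = 0) (r : F[X])
    (hr : M.charpoly = (X - C lam) * r) : aeval M r *ᵥ v = 0 := by
  obtain ⟨w, hw⟩ := exists_dotProduct_eq_one hz
  have hpow : ∀ k : ℕ, z ⬝ᵥ (M ^ k *ᵥ v) = 0 ∧ (M + vecMulVec w z) ^ k *ᵥ v = M ^ k *ᵥ v := by
    intro k
    induction k with
    | zero => simpa using hzv
    | succ k ih =>
      constructor
      · rw [pow_succ', ← mulVec_mulVec, dotProduct_mulVec, hzM, smul_dotProduct, ih.1, smul_zero]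
      · rw [pow_succ', ← mulVec_mulVec, ih.2, add_mulVec, vecMulVec_mulVec, ih.1,
          pow_succ', ← mulVec_mulVec]
        simp
  have hpoly : ∀ s : F[X], aeval (M + vecMulVec w z) s *ᵥ v = aeval M s *ᵥ v := by
    intro s
    simp only [aeval_eq_sum_range, sum_mulVec, smul_mulVec, (hpow _).2]
  have hchar := charpoly_add_vecMulVec M w z lam hzM hw
  have hchar' : (M + vecMulVec w z).charpoly = M.charpoly - r := by
    apply mul_left_cancel₀ (X_sub_C_ne_zero lam)
    rw [hchar, hr]; ring
  have := hpoly (M + vecMulVec w z).charpoly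
  rw [aeval_self_charpoly, hchar', map_sub, aeval_self_charpoly] at this
  simpa [neg_mulVec] using this.symm

lemma X_sub_C_dvd_charpoly (M : Matrix m m F) (z : m → F) (lam : F) (hz : z ≠ 0)
    (hzM : z ᵥ* M = lam • z) : X - C lam ∣ M.charpoly := by
  rw [dvd_iff_isRoot, IsRoot, eval_charpoly]
  apply exists_vecMul_eq_zero_iff.mp
  exact ⟨z, hz, by rw [vecMul_sub, hzM]; ext i; simp⟩

/-- The two-eigenvalue version of `aeval_mulVec_eq_zero_of_charpoly`: the difference of
`(X - lam') q` and `(X - lam) q` is a nonzero multiple of `q`. -/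
lemma aeval_mulVec_eq_zero_of_two (M : Matrix m m F) (z z' v : m → F) (lam lam' : F)
    (hz : z ≠ 0) (hz' : z' ≠ 0) (hzM : z ᵥ* M = lam • z) (hzM' : z' ᵥ* M = lam' • z')
    (hne : lam ≠ lam') (hzv : z ⬝ᵥ v = 0) (hzv' : z' ⬝ᵥ v = 0) (q : F[X])
    (hq : M.charpoly = (X - C lam) * ((X - C lam') * q)) : aeval M q *ᵥ v = 0 := by
  have h1 := aeval_mulVec_eq_zero_of_charpoly M z v lam hz hzM hzv _ hq
  have h2 := aeval_mulVec_eq_zero_of_charpoly M z' v lam' hz' hzM' hzv' ((X - C lam) * q)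
    (by rw [hq]; ring)
  have h3 : (lam - lam') • (aeval M q *ᵥ v) = 0 := by
    have : C (lam - lam') * q = (X - C lam') * q - (X - C lam) * q := by
      rw [C_sub]; ring
    rw [← smul_mulVec, ← map_smul, smul_eq_C_mul, this, map_sub, sub_mulVec, h1, h2, sub_zero]
  exact (smul_eq_zero.mp h3).resolve_left (sub_ne_zero.mpr hne)

/-- A square matrix with nonzero adjugate has corank at most one: if the adjugate is nonzero at
`(i, j)`, a kernel vector is determined by its `i`-th coordinate. -/
lemma kernel_line_of_adjugate_ne_zero (M : Matrix m m F) (hM : M.adjugate ≠ 0)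
    (z z' : m → F) (hz : M *ᵥ z = 0) (hz' : M *ᵥ z' = 0) (h0 : z ≠ 0) :
    ∃ c : F, z' = c • z := by
  obtain ⟨i, j, hij⟩ : ∃ i j, M.adjugate i j ≠ 0 := by
    by_contra! h
    exact hM (by ext i j; simpa using h i j)
  have key : ∀ x : m → F, M *ᵥ x = 0 → x i = 0 → x = 0 := by
    intro x hx hxi
    by_contra hne
    apply hij
    rw [adjugate_apply]
    apply exists_mulVec_eq_zero_iff.mp
    refine ⟨x, hne, ?_⟩
    ext k
    by_cases hk : k = j
    · subst hk
      simp [mulVec, hxi]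
    · have := congrFun hx k
      simpa [mulVec, updateRow_ne hk] using this
  have hzi : z i ≠ 0 := fun h => h0 (key z hz h)
  refine ⟨z' i / z i, ?_⟩
  have := key (z' - (z' i / z i) • z) (by rw [mulVec_sub, mulVec_smul, hz, hz']; simp)
    (by simp [hzi])
  exact sub_eq_zero.mp this

/-- The Fredholm alternative for a square matrix over a field. -/
lemma exists_mulVec_eq_of_orthogonal (M : Matrix m m F) (w : m → F)
    (h : ∀ k, k ᵥ* M = 0 → k ⬝ᵥ w = 0) : ∃ v, M *ᵥ v = w := by
  by_contra hcon
  have hmem : w ∉ LinearMap.range M.mulVecLin := by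
    rintro ⟨v, hv⟩
    exact hcon ⟨v, by simpa using hv⟩
  obtain ⟨f, hfw, hf⟩ := Submodule.exists_le_ker_of_notMem hmem
  have hfk : ∀ x, f x = (fun i => f (Pi.single i 1)) ⬝ᵥ x := by
    intro x
    conv_lhs => rw [pi_eq_sum_univ' x]
    simp [dotProduct, mul_comm, map_sum]
  apply hfw
  rw [hfk]
  apply h
  apply dotProduct_eq_zero
  intro x
  rw [← dotProduct_mulVec, ← hfk]
  exact hf ⟨x, by simp⟩

end

/-- If `p` divided every entry of the adjugate, then `pᵏ⁺²` would divide
`det (adj M) = (det M)ᵏ⁺¹`, which forces `p² ∣ det M`. -/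
lemma adjugate_mod_ne_zero {k : ℕ} (M : Matrix (Fin (k + 2)) (Fin (k + 2)) ℤ) (p : ℕ)
    (hp : p.Prime) (hdet : ¬ (p : ℤ) ^ 2 ∣ M.det) :
    (M.map ((↑) : ℤ → ZMod p)).adjugate ≠ 0 := by
  intro h
  apply hdet
  have hp' : Prime (p : ℤ) := Nat.prime_iff_prime_int.mp hp
  have hdvd : ∀ i j, (p : ℤ) ∣ M.adjugate i j := by
    intro i j
    have hmap : M.adjugate.map ((↑) : ℤ → ZMod p) = (M.map ((↑) : ℤ → ZMod p)).adjugate :=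
      (Int.castRingHom (ZMod p)).map_adjugate M
    rw [h] at hmap
    exact (ZMod.intCast_zmod_eq_zero_iff_dvd _ _).mp (congrFun (congrFun hmap i) j)
  choose N hN using hdvd
  have hadj : M.adjugate = (p : ℤ) • Matrix.of N := by
    ext i j
    simp [hN]
  have hpow : M.det ^ (k + 1) = (p : ℤ) ^ (k + 2) * (Matrix.of N).det := by
    have := det_adjugate M
    rw [hadj, det_smul] at this
    simpa using this.symm
  obtain ⟨d, hd⟩ : (p : ℤ) ∣ M.det :=
    hp'.dvd_of_dvd_pow (by rw [hpow]; exact Dvd.dvd.mul_right (dvd_pow_self _ (by omega)) _ :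
      (p : ℤ) ∣ M.det ^ (k + 1))
  have hd' : d ^ (k + 1) = p * (Matrix.of N).det := by
    apply mul_left_cancel₀ (pow_ne_zero (k + 1) hp'.ne_zero)
    rw [← mul_pow, ← hd, hpow]; ring
  obtain ⟨d', rfl⟩ := hp'.dvd_of_dvd_pow (Dvd.intro _ hd'.symm)
  exact ⟨d', by rw [hd]; ring⟩

/-! ### Twins, the determinant of `Ŵ`, and the integral form of `Q` -/

lemma alphaVec_dotProduct {τ τ' : Fin (n + 2)} (hne : τ ≠ τ') (f : Fin (n + 2) → ℤ) :
    alphaVec τ τ' ⬝ᵥ f = f τ' - f τ := by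
  have h : alphaVec τ τ' = Pi.single τ' 1 - Pi.single τ 1 := by
    ext i
    by_cases h1 : i = τ
    · subst h1; simp [alphaVec, hne]
    · by_cases h2 : i = τ'
      · subst h2; simp [alphaVec, h1]
      · simp [alphaVec, h1, h2]
  rw [h, sub_dotProduct]; simp

lemma alphaVec_dotProduct_self {τ τ' : Fin (n + 2)} (hne : τ ≠ τ') :
    alphaVec τ τ' ⬝ᵥ alphaVec τ τ' = 2 := by
  rw [alphaVec_dotProduct hne]
  simp [alphaVec, hne.symm]

lemma mulVec_alphaVec {A : Matrix (Fin (n + 2)) (Fin (n + 2)) ℤ} (hA : A.IsAdjMatrix)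
    {τ τ' : Fin (n + 2)} (hne : τ ≠ τ') (htw : IsTwinPair A τ τ') :
    A *ᵥ alphaVec τ τ' = lam1 A τ τ' • alphaVec τ τ' := by
  ext i
  have h1 : (A *ᵥ alphaVec τ τ') i = A i τ' - A i τ := by
    rw [mulVec, dotProduct_comm, alphaVec_dotProduct hne]
  rw [h1]
  by_cases hi : i = τ
  · subst hi; simp [alphaVec, lam1, hA.apply_diag]
  by_cases hi' : i = τ'
  · subst hi'; simp [alphaVec, lam1, hA.apply_diag, hi, hA.symm.apply τ i]
  · have := htw i τ
    rw [Equiv.swap_apply_of_ne_of_ne hi hi', Equiv.swap_apply_left] at this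
    simp [alphaVec, hi, hi', this]

lemma dotProduct_pow_mulVec_of_eigen {R m : Type*} [CommRing R] [Fintype m] [DecidableEq m]
    {a : Matrix m m R} (ha : aᵀ = a) {z e : m → R} {lam : R} (hz : a *ᵥ z = lam • z)
    (hze : z ⬝ᵥ e = 0) (k : ℕ) : z ⬝ᵥ (a ^ k *ᵥ e) = 0 := by
  induction k with
  | zero => simpa using hze
  | succ k ih =>
    rw [pow_succ', ← mulVec_mulVec, dotProduct_mulVec, ← mulVec_transpose, ha, hz,
      smul_dotProduct, ih, smul_zero]

/-- Laplace expansion along the last column, for the walk matrix with that column replaced by `f`. -/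
lemma det_hatW_eq_sum (A : Matrix (Fin (n + 2)) (Fin (n + 2)) ℤ) (f : Fin (n + 2) → ℤ) :
    (Matrix.of fun i (j : Fin (n + 2)) =>
      if (j : ℕ) = n + 1 then f i else walkMatrix A i j).det = f ⬝ᵥ xiVec A := by
  rw [det_succ_column _ (Fin.last (n + 1)), dotProduct]
  refine Finset.sum_congr rfl fun i _ => ?_
  have hX : (Matrix.of fun i (j : Fin (n + 2)) =>
      if (j : ℕ) = n + 1 then f i else walkMatrix A i j).submatrix i.succAbove
        (Fin.last (n + 1)).succAbove = Xmat A i := by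
    ext r c
    have : (c : ℕ) ≠ n + 1 := by omega
    simp [Xmat, Vmat, this]
  rw [hX]
  simp [xiVec, cofactorLast]
  ring

/-- The cofactors at the twins are opposite, since the corresponding rows of the walk matrix are
equal; expanding `Ŵ` along its last column leaves twice one of them. -/
lemma det_hatW {A : Matrix (Fin (n + 2)) (Fin (n + 2)) ℤ} (hA : A.IsAdjMatrix)
    {τ τ' : Fin (n + 2)} (hne : τ ≠ τ') (htw : IsTwinPair A τ τ') :
    (hatW A τ τ').det = -(2 * cofactorLast A τ) := by
  have hrow : ∀ j, walkMatrix A τ' j = walkMatrix A τ j := by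
    intro j
    have h := dotProduct_pow_mulVec_of_eigen hA.symm (mulVec_alphaVec hA hne htw)
      (e := eVec (n + 2)) (by rw [alphaVec_dotProduct hne]; simp [eVec]) j
    rw [alphaVec_dotProduct hne] at h
    simpa [walkMatrix] using sub_eq_zero.mp h
  have hswap : cofactorLast A τ' = - cofactorLast A τ := by
    have h1 := det_hatW_eq_sum A (Pi.single τ 1)
    have h2 := det_hatW_eq_sum A (Pi.single τ' 1)
    simp only [single_dotProduct, one_mul, xiVec] at h1 h2
    have h3 := det_permute (Equiv.swap τ τ') (Matrix.of fun i (j : Fin (n + 2)) =>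
      if (j : ℕ) = n + 1 then (Pi.single τ 1 : Fin (n + 2) → ℤ) i else walkMatrix A i j)
    rw [Equiv.Perm.sign_swap hne, h1] at h3
    rw [← h2]
    have h4 : (Matrix.of fun i (j : Fin (n + 2)) =>
        if (j : ℕ) = n + 1 then (Pi.single τ 1 : Fin (n + 2) → ℤ) i
          else walkMatrix A i j).submatrix (Equiv.swap τ τ') id =
        Matrix.of fun i (j : Fin (n + 2)) =>
          if (j : ℕ) = n + 1 then (Pi.single τ' 1 : Fin (n + 2) → ℤ) i
            else walkMatrix A i j := by
      ext i j
      by_cases hi : i = τ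
      · subst hi; simp [hrow, hne, hne.symm]
      by_cases hi' : i = τ'
      · subst hi'; simp [hrow]
      · simp [Equiv.swap_apply_of_ne_of_ne hi hi', Pi.single_apply, hi, hi']
    rw [← h4, h3]; simp
  have := det_hatW_eq_sum A (alphaVec τ τ')
  rw [alphaVec_dotProduct hne] at this
  change (hatW A τ τ').det = _ at this
  rw [this]
  simp only [xiVec]
  rw [hswap]; ring

lemma not_sq_dvd_det_hatW {A : Matrix (Fin (n + 2)) (Fin (n + 2)) ℤ} (hA : A.IsAdjMatrix)
    {τ τ' : Fin (n + 2)} (hne : τ ≠ τ') (htw : IsTwinPair A τ τ') {b : ℤ} (hsf : Squarefree b)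
    {k : ℕ} (hcof : cofactorLast A τ = 2 ^ k * b ∨ cofactorLast A τ = -(2 ^ k * b))
    {p : ℕ} (hp : p.Prime) (hp2 : p ≠ 2) : ¬ (p : ℤ) ^ 2 ∣ (hatW A τ τ').det := by
  intro h
  have h1 : (p : ℤ) ^ 2 ∣ 2 ^ (k + 1) * b := by
    rw [det_hatW hA hne htw, dvd_neg] at h
    rcases hcof with hc | hc
    · rw [hc] at h; rwa [pow_succ' 2 k, mul_assoc]
    · rw [hc, mul_neg, dvd_neg] at h; rwa [pow_succ' 2 k, mul_assoc]
  have hcop : IsCoprime ((p : ℤ) ^ 2) (2 ^ (k + 1)) := by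
    apply IsCoprime.pow
    exact_mod_cast Nat.isCoprime_iff_coprime.mpr ((Nat.coprime_primes hp Nat.prime_two).mpr hp2)
  have h2 := hcop.dvd_of_dvd_mul_left h1
  rw [sq] at h2
  exact (Nat.prime_iff_prime_int.mp hp).not_isUnit (hsf _ h2)

lemma level_spec {m : ℕ} (Q : Matrix (Fin m) (Fin m) ℚ) :
    0 < level Q ∧ ∀ i j, ((level Q : ℚ) * Q i j).den = 1 := by
  have hne : {k : ℕ | 0 < k ∧ ∀ i j, ((k : ℚ) * Q i j).den = 1}.Nonempty := by
    refine ⟨∏ i, ∏ j, (Q i j).den, ?_, ?_⟩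
    · exact Finset.prod_pos fun i _ => Finset.prod_pos fun j _ => (Q i j).den_pos
    · intro i j
      obtain ⟨c, hc⟩ : (Q i j).den ∣ ∏ i, ∏ j, (Q i j).den :=
        (Finset.dvd_prod_of_mem (fun j => (Q i j).den) (Finset.mem_univ j)).trans
          (Finset.dvd_prod_of_mem (fun i => ∏ j, (Q i j).den) (Finset.mem_univ i))
      rw [hc]
      have : (((Q i j).den * c : ℕ) : ℚ) * Q i j = (((c : ℤ) * (Q i j).num : ℤ) : ℚ) := by
        push_cast
        linear_combination (c : ℚ) * Rat.den_mul_eq_num (Q i j)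
      rw [this, Rat.den_intCast]
  exact Nat.sInf_mem hne

/-- The integral data attached to `Q`, with `p * m` the level: `U` is the level times `Q`, and `B` is
`Qᵀ A Q`. Minimality of the level gives an entry of `U` prime to `p`. -/
lemma exists_integral_lift (A : Matrix (Fin (n + 2)) (Fin (n + 2)) ℤ)
    (Q : Matrix (Fin (n + 2)) (Fin (n + 2)) ℚ) (hQ : IsRegularOrthogonal Q)
    (hadj : (Qᵀ * A.map ((↑) : ℤ → ℚ) * Q).IsAdjMatrix)
    (p : ℕ) (hp : p.Prime) (hpl : p ∣ level Q) :
    ∃ (U B : Matrix (Fin (n + 2)) (Fin (n + 2)) ℤ) (m : ℤ),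
      A * U = U * B ∧ Uᵀ * U = (p * m) ^ 2 • (1 : Matrix (Fin (n + 2)) (Fin (n + 2)) ℤ) ∧
      U * Uᵀ = (p * m) ^ 2 • (1 : Matrix (Fin (n + 2)) (Fin (n + 2)) ℤ) ∧
      U *ᵥ eVec (n + 2) = (p * m) • eVec (n + 2) ∧
      Uᵀ *ᵥ eVec (n + 2) = (p * m) • eVec (n + 2) ∧
      Bᵀ = B ∧ B.charpoly = A.charpoly ∧ ∃ i j, ¬ (p : ℤ) ∣ U i j := by
  obtain ⟨hpos, hint⟩ := level_spec Q
  obtain ⟨m, hm⟩ := hpl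
  have hinj : Function.Injective fun M : Matrix (Fin (n + 2)) (Fin (n + 2)) ℤ =>
      M.map (Int.castRingHom ℚ) := Matrix.map_injective Int.cast_injective
  obtain ⟨hQQ, hQe⟩ := hQ
  have hQQ' : Q * Qᵀ = 1 := mul_eq_one_comm.mp hQQ
  have hQe' : Qᵀ *ᵥ (fun _ => (1 : ℚ)) = fun _ => 1 := by
    conv_lhs => rw [← hQe, mulVec_mulVec, hQQ, one_mulVec]
  set Aq : Matrix (Fin (n + 2)) (Fin (n + 2)) ℚ := A.map (Int.castRingHom ℚ) with hAq
  change (Qᵀ * Aq * Q).IsAdjMatrix at hadj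
  have hU : ∃ U : Matrix (Fin (n + 2)) (Fin (n + 2)) ℤ,
      U.map (Int.castRingHom ℚ) = (level Q : ℚ) • Q := by
    refine ⟨Matrix.of fun i j => ((level Q : ℚ) * Q i j).num, ?_⟩
    ext i j
    simpa using (Rat.den_eq_one_iff _).mp (hint i j)
  have hB : ∃ B : Matrix (Fin (n + 2)) (Fin (n + 2)) ℤ,
      B.map (Int.castRingHom ℚ) = Qᵀ * Aq * Q := by
    refine ⟨Matrix.of fun i j => if (Qᵀ * Aq * Q) i j = 0 then 0 else 1, ?_⟩
    ext i j
    rcases hadj.zero_or_one i j with h | h <;> simp [h]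
  obtain ⟨U, hU⟩ := hU
  obtain ⟨B, hB⟩ := hB
  have hl : ((p * m : ℤ) : ℚ) = (level Q : ℚ) := by rw [hm]; push_cast; rfl
  have h1 : ((((p : ℤ) * m) ^ 2 • (1 : Matrix (Fin (n + 2)) (Fin (n + 2)) ℤ)).map
      (Int.castRingHom ℚ)) = (level Q : ℚ) ^ 2 • 1 := by
    ext i j
    rw [← hl]
    simp only [Matrix.map_apply, Matrix.smul_apply, Matrix.one_apply]
    split_ifs <;> simp
  refine ⟨U, B, m, ?_, ?_, ?_, ?_, ?_, ?_, ?_, ?_⟩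
  · apply hinj
    simp only [Matrix.map_mul, hU, hB, ← hAq]
    rw [Matrix.mul_smul, Matrix.smul_mul, ← mul_assoc, ← mul_assoc, hQQ', one_mul]
  · apply hinj
    simp only [Matrix.map_mul, Matrix.transpose_map, hU]
    rw [h1, transpose_smul, Matrix.smul_mul, Matrix.mul_smul, hQQ, smul_smul, sq]
  · apply hinj
    simp only [Matrix.map_mul, Matrix.transpose_map, hU]
    rw [h1, transpose_smul, Matrix.smul_mul, Matrix.mul_smul, hQQ', smul_smul, sq]
  · ext i
    have h := RingHom.map_mulVec (Int.castRingHom ℚ) U (eVec (n + 2)) i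
    have he : (Int.castRingHom ℚ) ∘ eVec (n + 2) = fun _ => (1 : ℚ) := by ext; simp [eVec]
    rw [hU, he, smul_mulVec, hQe, ← hl] at h
    apply Int.cast_injective (α := ℚ)
    simpa [eVec] using h
  · ext i
    have h := RingHom.map_mulVec (Int.castRingHom ℚ) Uᵀ (eVec (n + 2)) i
    have he : (Int.castRingHom ℚ) ∘ eVec (n + 2) = fun _ => (1 : ℚ) := by ext; simp [eVec]
    rw [transpose_map, hU, he, transpose_smul, smul_mulVec, hQe', ← hl] at h
    apply Int.cast_injective (α := ℚ)
    simpa [eVec] using h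
  · apply hinj
    simp only [Matrix.transpose_map, hB]
    exact hadj.symm
  · apply Polynomial.map_injective (Int.castRingHom ℚ) Int.cast_injective
    rw [← charpoly_map, ← charpoly_map, hB, charpoly_mul_comm, ← mul_assoc, hQQ', one_mul]
  · by_contra! hall
    have hm0 : 0 < m := by
      rcases Nat.eq_zero_or_pos m with h | h
      · simp [h] at hm; omega
      · exact h
    have hmem : m ∈ {k : ℕ | 0 < k ∧ ∀ i j, ((k : ℚ) * Q i j).den = 1} := by
      refine ⟨hm0, fun i j => ?_⟩
      obtain ⟨c, hc⟩ := hall i j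
      have h := congrFun (congrFun hU i) j
      simp only [map_apply, hc, Matrix.smul_apply, smul_eq_mul, hm] at h
      have hp0 : (p : ℚ) ≠ 0 := by exact_mod_cast hp.ne_zero
      have : (m : ℚ) * Q i j = (c : ℚ) := by
        apply mul_left_cancel₀ hp0
        simp only [eq_intCast] at h
        push_cast at h
        linear_combination -h
      rw [this, Rat.den_intCast]
    have hle : level Q ≤ m := Nat.sInf_le hmem
    rw [hm] at hle
    have := hp.two_le
    nlinarith

/-! ### Linear algebra of `Ŵ` over a field -/

section
open Polynomial
variable {F : Type*} [Field F]

/-- The matrix with columns `e, a e, …, aⁿ e, α` over a field, `e` being the all-ones vector. For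
`a` and `α` reduced modulo `p` it is the reduction of `hatW` (see `hatW_map`). -/
def hatWField (a : Matrix (Fin (n + 2)) (Fin (n + 2)) F) (α : Fin (n + 2) → F) :
    Matrix (Fin (n + 2)) (Fin (n + 2)) F :=
  Matrix.of fun i j => if (j : ℕ) = n + 1 then α i else (a ^ (j : ℕ) *ᵥ fun _ => 1) i

lemma hatWField_transpose_mulVec (a : Matrix (Fin (n + 2)) (Fin (n + 2)) F)
    (α x : Fin (n + 2) → F) (j : Fin (n + 2)) :
    ((hatWField a α)ᵀ *ᵥ x) j =
      if (j : ℕ) = n + 1 then α ⬝ᵥ x else (a ^ (j : ℕ) *ᵥ fun _ => 1) ⬝ᵥ x := by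
  split_ifs with h <;> simp [hatWField, mulVec, dotProduct, h]

/-- The vector `z` is the projection of `y` orthogonal to `α`. It spans the kernel of the transpose of
`hatWField a α`, and is therefore an eigenvector of `a`. A vector `u` in the kernel of the
transposed walk matrix is of the form `c z + s α`; if the quadratic forms of both `1` and `a` vanish
at `u`, then `s = 0` because the two eigenvalues differ. -/
lemma exists_eigenvector (h2 : (2 : F) ≠ 0) (a : Matrix (Fin (n + 2)) (Fin (n + 2)) F)
    (ha : aᵀ = a) (α : Fin (n + 2) → F) (lam₁ : F) (hα : a *ᵥ α = lam₁ • α) (hαα : α ⬝ᵥ α = 2)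
    (hαe : α ⬝ᵥ (fun _ => 1) = 0) (hadj : (hatWField a α)ᵀ.adjugate ≠ 0)
    (y : Fin (n + 2) → F) (hy : ∀ k ≤ n + 1, (a ^ k *ᵥ fun _ => 1) ⬝ᵥ y = 0)
    (hy' : (a - lam₁ • (1 : Matrix (Fin (n + 2)) (Fin (n + 2)) F)) *ᵥ y ≠ 0) :
    ∃ (z : Fin (n + 2) → F) (lam₀ : F), z ≠ 0 ∧ a *ᵥ z = lam₀ • z ∧ lam₀ ≠ lam₁ ∧ α ⬝ᵥ z = 0 ∧
      z ⬝ᵥ (fun _ => 1) = 0 ∧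
      ∀ u : Fin (n + 2) → F, (∀ k ≤ n + 1, (a ^ k *ᵥ fun _ => 1) ⬝ᵥ u = 0) → u ⬝ᵥ u = 0 →
        u ⬝ᵥ (a *ᵥ u) = 0 → ∃ c : F, u = c • z := by
  have hWα : ∀ k, (a ^ k *ᵥ fun _ => 1) ⬝ᵥ α = 0 := fun k => by
    rw [dotProduct_comm]; exact dotProduct_pow_mulVec_of_eigen ha hα hαe k
  have hproj : ∀ u : Fin (n + 2) → F, α ⬝ᵥ (u - (α ⬝ᵥ u / 2) • α) = 0 := by
    intro u
    rw [dotProduct_sub, dotProduct_smul, hαα, smul_eq_mul, div_mul_cancel₀ _ h2, sub_self]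
  have hker : ∀ u : Fin (n + 2) → F, (∀ k ≤ n + 1, (a ^ k *ᵥ fun _ => 1) ⬝ᵥ u = 0) →
      (hatWField a α)ᵀ *ᵥ (u - (α ⬝ᵥ u / 2) • α) = 0 := by
    intro u hu
    ext j
    rw [hatWField_transpose_mulVec, hproj]
    split_ifs with h
    · rfl
    · rw [dotProduct_sub, dotProduct_smul, hWα, hu _ (by omega)]; simp
  have hαa : ∀ x : Fin (n + 2) → F, α ⬝ᵥ (a *ᵥ x) = lam₁ * (α ⬝ᵥ x) := by
    intro x
    rw [dotProduct_mulVec, ← mulVec_transpose, ha, hα, smul_dotProduct, smul_eq_mul]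
  set z := y - (α ⬝ᵥ y / 2) • α with hz
  have hαz : α ⬝ᵥ z = 0 := hproj y
  have hza : (a - lam₁ • (1 : Matrix (Fin (n + 2)) (Fin (n + 2)) F)) *ᵥ z ≠ 0 := by
    have : (a - lam₁ • (1 : Matrix (Fin (n + 2)) (Fin (n + 2)) F)) *ᵥ α = 0 := by
      rw [sub_mulVec, hα, smul_mulVec, one_mulVec, sub_self]
    rwa [hz, mulVec_sub, mulVec_smul, this, smul_zero, sub_zero]
  have hz0 : z ≠ 0 := by
    intro h; rw [h, mulVec_zero] at hza; exact hza rfl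
  have hWz : ∀ k ≤ n + 1, (a ^ k *ᵥ fun _ => 1) ⬝ᵥ z = 0 := by
    intro k hk
    rw [hz, dotProduct_sub, dotProduct_smul, hWα, hy k hk]; simp
  obtain ⟨lam₀, hlam⟩ : ∃ c : F, a *ᵥ z = c • z := by
    refine kernel_line_of_adjugate_ne_zero _ hadj z _ (hker y hy) ?_ hz0
    ext j
    rw [hatWField_transpose_mulVec, hαa, hαz]
    split_ifs with h
    · simp
    · rw [dotProduct_mulVec, ← mulVec_transpose, ha, mulVec_mulVec, ← pow_succ',
        hWz _ (by omega)]
      rfl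
  have hne : lam₀ ≠ lam₁ := by
    rintro rfl
    apply hza
    rw [sub_mulVec, hlam, smul_mulVec, one_mulVec, sub_self]
  refine ⟨z, lam₀, hz0, hlam, hne, hαz, ?_, ?_⟩
  · simpa [dotProduct_comm] using hWz 0 (by omega)
  intro u hu huu huau
  obtain ⟨c, hc⟩ := kernel_line_of_adjugate_ne_zero _ hadj z _ (hker y hy) (hker u hu) hz0
  obtain ⟨s, hs⟩ : ∃ s, s = α ⬝ᵥ u / 2 := ⟨_, rfl⟩
  rw [← hs, sub_eq_iff_eq_add] at hc
  have hzα : z ⬝ᵥ α = 0 := by rw [dotProduct_comm]; exact hαz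
  rw [hc] at huu huau
  simp only [mulVec_add, mulVec_smul, hlam, hα, add_dotProduct, dotProduct_add, smul_dotProduct,
    dotProduct_smul, hαz, hzα, hαα, smul_eq_mul] at huu huau
  have h1 : c * (c * (z ⬝ᵥ z)) = 0 := by
    apply (mul_eq_zero.mp (?_ : (lam₀ - lam₁) * (c * (c * (z ⬝ᵥ z))) = 0)).resolve_left
      (sub_ne_zero.mpr hne)
    linear_combination huau - lam₁ * huu
  have h3 : s = 0 := by
    have : 2 * (s * s) = 0 := by linear_combination huu - h1
    simpa [h2] using this
  exact ⟨c, by rw [hc, h3]; simp⟩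

lemma sum_coeff_mul_pow_mulVec (b : Matrix (Fin (n + 2)) (Fin (n + 2)) F) (q : F[X])
    (hq : q.natDegree = n) (i : Fin (n + 2)) :
    ∑ j : Fin (n + 2), q.coeff j * (b ^ (j : ℕ) *ᵥ fun _ => 1) i =
      (aeval b q *ᵥ fun _ => 1) i := by
  rw [aeval_eq_sum_range' (n := n + 2) (by omega), sum_mulVec, Finset.sum_apply,
    Finset.sum_range]
  simp [smul_mulVec]

/-- The coefficient vector of `q` spans the kernel of `hatWField a α`, and its last entry, at the
column `α`, is zero. Hence only the entries of `w` away from the last one matter for solvability. -/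
lemma exists_hatWField_solution (a b : Matrix (Fin (n + 2)) (Fin (n + 2)) F)
    (α : Fin (n + 2) → F) (hadj : (hatWField a α).adjugate ≠ 0) (q : F[X])
    (hq : q.natDegree = n) (hq0 : q ≠ 0) (hqa : (aeval a q *ᵥ fun _ => (1 : F)) = 0)
    (m : F) (i : Fin (n + 2)) (hqb : m * (aeval b q *ᵥ fun _ => 1) i = 0)
    (w : Fin (n + 2) → F)
    (hw : ∀ j : Fin (n + 2), (j : ℕ) ≠ n + 1 → w j = m * (b ^ (j : ℕ) *ᵥ fun _ => 1) i) :
    ∃ v, (hatWField a α)ᵀ *ᵥ v = w := by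
  have hlast : ∀ j : Fin (n + 2), (j : ℕ) = n + 1 → q.coeff j = 0 := fun j hj =>
    coeff_eq_zero_of_natDegree_lt (by omega)
  have hqker : hatWField a α *ᵥ (fun j : Fin (n + 2) => q.coeff j) = 0 := by
    ext r
    refine Eq.trans ?_ (congrFun hqa r)
    rw [← sum_coeff_mul_pow_mulVec a q hq r]
    rw [mulVec, dotProduct]
    refine Finset.sum_congr rfl fun j _ => ?_
    by_cases hj : (j : ℕ) = n + 1
    · rw [hlast j hj]; simp
    · simp [hatWField, hj, mul_comm]
  have hqne : (fun j : Fin (n + 2) => q.coeff j) ≠ 0 := by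
    intro h
    have := congrFun h ⟨n, by omega⟩
    simp only [Pi.zero_apply] at this
    rw [← hq] at this
    exact hq0 (leadingCoeff_eq_zero.mp this)
  apply exists_mulVec_eq_of_orthogonal
  intro k hk
  rw [vecMul_transpose] at hk
  obtain ⟨c, rfl⟩ := kernel_line_of_adjugate_ne_zero _ hadj _ _ hqker hk hqne
  rw [smul_dotProduct]
  have : (fun j : Fin (n + 2) => q.coeff j) ⬝ᵥ w = 0 := by
    rw [← hqb, ← sum_coeff_mul_pow_mulVec b q hq i, dotProduct, Finset.mul_sum]
    refine Finset.sum_congr rfl fun j _ => ?_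
    by_cases hj : (j : ℕ) = n + 1
    · rw [hlast j hj]; simp
    · rw [hw j hj]; ring
  rw [this, smul_zero]

end

/-! ### Reduction modulo `p` -/

lemma cast_pow_mulVec_eVec {F : Type*} [Field F] (A : Matrix (Fin (n + 2)) (Fin (n + 2)) ℤ)
    (k : ℕ) (i : Fin (n + 2)) : Int.castRingHom F ((A ^ k *ᵥ eVec (n + 2)) i) =
      (A.map (Int.castRingHom F) ^ k *ᵥ fun _ => 1) i := by
  rw [RingHom.map_mulVec, Matrix.map_pow]
  congr 2
  ext
  simp [eVec]

lemma hatW_map {F : Type*} [Field F] (A : Matrix (Fin (n + 2)) (Fin (n + 2)) ℤ)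
    (τ τ' : Fin (n + 2)) : (hatW A τ τ').map (Int.castRingHom F) =
      hatWField (A.map (Int.castRingHom F)) (Int.castRingHom F ∘ alphaVec τ τ') := by
  ext i j
  simp only [hatW, hatWField, map_apply, of_apply, walkMatrix]
  split_ifs
  · rfl
  · exact cast_pow_mulVec_eVec A j i

/-- The entries of the transposed walk matrix of `A` applied to a column of `U`. -/
lemma pow_mulVec_dotProduct_col {A U B : Matrix (Fin (n + 2)) (Fin (n + 2)) ℤ} {l : ℤ}
    (hA : Aᵀ = A) (hB : Bᵀ = B) (hAU : A * U = U * B)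
    (hUe : Uᵀ *ᵥ eVec (n + 2) = l • eVec (n + 2)) (k : ℕ) (j : Fin (n + 2)) :
    (A ^ k *ᵥ eVec (n + 2)) ⬝ᵥ U.col j = l * (B ^ k *ᵥ eVec (n + 2)) j := by
  have h1 : Uᵀ * A = B * Uᵀ := by
    have := congrArg transpose hAU
    rwa [transpose_mul, transpose_mul, hA, hB] at this
  have h2 : Uᵀ * A ^ k = B ^ k * Uᵀ := by
    induction k with
    | zero => simp
    | succ k ih => rw [pow_succ, ← mul_assoc, ih, mul_assoc, h1, ← mul_assoc, pow_succ]
  have h3 : Uᵀ *ᵥ (A ^ k *ᵥ eVec (n + 2)) = l • (B ^ k *ᵥ eVec (n + 2)) := by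
    rw [mulVec_mulVec, h2, ← mulVec_mulVec, hUe, mulVec_smul]
  have h4 := congrFun h3 j
  rw [dotProduct_comm]
  exact h4

lemma col_dotProduct_self {A U B : Matrix (Fin (n + 2)) (Fin (n + 2)) ℤ} {l : ℤ}
    (hAU : A * U = U * B)
    (hUU : Uᵀ * U = l ^ 2 • (1 : Matrix (Fin (n + 2)) (Fin (n + 2)) ℤ)) (j : Fin (n + 2)) :
    U.col j ⬝ᵥ U.col j = l ^ 2 ∧ U.col j ⬝ᵥ (A *ᵥ U.col j) = l ^ 2 * B j j := by
  constructor
  · have := congrFun (congrFun hUU j) j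
    simpa [mul_apply, dotProduct] using this
  · have h : Uᵀ * (A * U) = l ^ 2 • B := by
      rw [hAU, ← mul_assoc, hUU, Matrix.smul_mul, one_mul]
    exact congrFun (congrFun h j) j

/-- if an odd prime `p` divides the level of some `Q ∈ 𝒬_G` and the `𝔽_p`
condition holds, then `Ŵ(G)ᵀ x ≡ 0 (mod p²)` has a solution `x ≢ 0 (mod p)`. -/
theorem exists_solution_mod_p_squared
    (n : ℕ) (A : Matrix (Fin (n + 2)) (Fin (n + 2)) ℤ)
    (hA : A.IsAdjMatrix) (hac : IsAlmostControllable A)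
    (τ τ' : Fin (n + 2)) (hlt : τ < τ') (htw : IsTwinPair A τ τ')
    (b : ℤ) (hodd : Odd b) (hsf : Squarefree b) (hpos : 0 < b)
    (hcof : cofactorLast A τ = 2 ^ ((n + 2) / 2 - 1) * b ∨
            cofactorLast A τ = -(2 ^ ((n + 2) / 2 - 1) * b))
    (Q : Matrix (Fin (n + 2)) (Fin (n + 2)) ℚ) (hQ : IsRegularOrthogonal Q)
    (hadj : (Qᵀ * A.map ((↑) : ℤ → ℚ) * Q).IsAdjMatrix)
    (p : ℕ) (hp : p.Prime) (hp2 : p ≠ 2) (hpl : p ∣ level Q)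
    (hy : ∃ y : Fin (n + 2) → ZMod p,
      ((walkMatrix A).map ((↑) : ℤ → ZMod p))ᵀ *ᵥ y = 0 ∧
      (A.map ((↑) : ℤ → ZMod p) -
        ((lam1 A τ τ' : ZMod p)) •
          (1 : Matrix (Fin (n + 2)) (Fin (n + 2)) (ZMod p))) *ᵥ y ≠ 0) :
    ∃ x : Fin (n + 2) → ℤ, (¬ ∀ i, (p : ℤ) ∣ x i) ∧
      ∀ i, ((p : ℤ)) ^ 2 ∣ ((hatW A τ τ')ᵀ *ᵥ x) i := by
  have : Fact p.Prime := ⟨hp⟩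
  have hne : τ ≠ τ' := hlt.ne
  obtain ⟨U, B, m, hAU, hUU, hUU', hUe, hUTe, hB, hchar, i₀, j₀, hij⟩ :=
    exists_integral_lift A Q hQ hadj p hp hpl
  have hdet := not_sq_dvd_det_hatW hA hne htw hsf hcof hp hp2
  set φ := Int.castRingHom (ZMod p) with hφ
  have hφ0 : ∀ x : ℤ, φ x = 0 ↔ (p : ℤ) ∣ x := fun x => ZMod.intCast_zmod_eq_zero_iff_dvd x p
  have hφp : φ p = 0 := (hφ0 _).mpr dvd_rfl
  set a := A.map φ with ha
  set b' := B.map φ with hb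
  set α := φ ∘ alphaVec τ τ' with hα
  have hHmap : (hatW A τ τ').map φ = hatWField a α := hatW_map A τ τ'
  have hadj₁ : (hatWField a α).adjugate ≠ 0 := by
    rw [← hHmap]; exact adjugate_mod_ne_zero _ p hp hdet
  have hadj₂ : (hatWField a α)ᵀ.adjugate ≠ 0 := by
    rw [← adjugate_transpose]
    intro h
    exact hadj₁ (transpose_eq_zero.mp h)
  have h2 : (2 : ZMod p) ≠ 0 := by
    intro h
    have h' : φ 2 = 0 := by simpa using h
    rw [hφ0] at h'
    exact hp2 ((Nat.prime_dvd_prime_iff_eq hp Nat.prime_two).mp (by exact_mod_cast h'))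
  have hat : aᵀ = a := by rw [ha, ← transpose_map, hA.symm.eq]
  have hone : φ ∘ eVec (n + 2) = fun _ => 1 := by ext; simp [eVec]
  have haα : a *ᵥ α = φ (lam1 A τ τ') • α := by
    ext i
    rw [ha, hα, ← RingHom.map_mulVec, mulVec_alphaVec hA hne htw]
    simp
  have hαα : α ⬝ᵥ α = 2 := by
    rw [hα, ← RingHom.map_dotProduct, alphaVec_dotProduct_self hne]; simp
  have hαe : α ⬝ᵥ (fun _ => 1) = 0 := by
    rw [← hone, hα, ← RingHom.map_dotProduct, alphaVec_dotProduct hne]; simp [eVec]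
  have hwalk : ∀ k, φ ∘ (A ^ k *ᵥ eVec (n + 2)) = a ^ k *ᵥ fun _ => 1 := fun k =>
    funext (cast_pow_mulVec_eVec A k)
  obtain ⟨y, hy1, hy2⟩ := hy
  obtain ⟨z, lam₀, hz0, hz, hlam, hαz, hze, hcol⟩ := exists_eigenvector h2 a hat α
    (φ (lam1 A τ τ')) haα hαα hαe hadj₂ y (by
      intro k hk
      have h := congrFun hy1 ⟨k, by omega⟩
      rw [← hwalk]
      exact h) hy2
  -- Every column of `U` is a multiple of `z` modulo `p`.
  have hUcol : ∀ j, ∃ c : ZMod p, φ ∘ U.col j = c • z := by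
    intro j
    obtain ⟨h1, h3⟩ := col_dotProduct_self hAU hUU j
    apply hcol
    · intro k _
      rw [← hwalk, ← RingHom.map_dotProduct,
        pow_mulVec_dotProduct_col hA.symm hB hAU hUTe k j, map_mul, map_mul, hφp]
      ring
    · rw [← RingHom.map_dotProduct, h1, map_pow, map_mul, hφp]; ring
    · have : a *ᵥ (φ ∘ U.col j) = φ ∘ (A *ᵥ U.col j) := by
        ext i; rw [ha, ← RingHom.map_mulVec]; rfl
      rw [this, ← RingHom.map_dotProduct, h3, map_mul, map_pow, map_mul, hφp]; ring
  have hαU : ∀ j, (p : ℤ) ∣ alphaVec τ τ' ⬝ᵥ U.col j := by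
    intro j
    obtain ⟨c, hc⟩ := hUcol j
    rw [← hφ0, RingHom.map_dotProduct, hc, dotProduct_smul]
    change c • (α ⬝ᵥ z) = 0
    rw [hαz, smul_zero]
  choose g hg using hαU
  -- Both eigenvalues are roots of the characteristic polynomial; `q` is the remaining factor.
  have hzv : z ᵥ* a = lam₀ • z := by rw [← mulVec_transpose, hat, hz]
  have hαv : α ᵥ* a = φ (lam1 A τ τ') • α := by rw [← mulVec_transpose, hat, haα]
  have hα0 : α ≠ 0 := by
    intro h; rw [h, zero_dotProduct] at hαα; exact h2 hαα.symm
  obtain ⟨r, hr⟩ := X_sub_C_dvd_charpoly a z lam₀ hz0 hzv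
  obtain ⟨q, hq⟩ : (Polynomial.X - Polynomial.C (φ (lam1 A τ τ'))) ∣ r := by
    have h := X_sub_C_dvd_charpoly a α _ hα0 hαv
    rw [hr] at h
    exact (Polynomial.isCoprime_X_sub_C_of_isUnit_sub
      (sub_ne_zero.mpr hlam.symm).isUnit).dvd_of_dvd_mul_left h
  rw [hq] at hr
  have hq0 : q ≠ 0 := by
    rintro rfl
    exact (charpoly_monic a).ne_zero (by rw [hr]; simp)
  have hqdeg : q.natDegree = n := by
    have h := charpoly_natDegree_eq_dim a
    rw [hr, Polynomial.natDegree_mul (Polynomial.X_sub_C_ne_zero _)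
      (mul_ne_zero (Polynomial.X_sub_C_ne_zero _) hq0),
      Polynomial.natDegree_mul (Polynomial.X_sub_C_ne_zero _) hq0] at h
    simp only [Polynomial.natDegree_X_sub_C, Fintype.card_fin] at h
    omega
  have hqa : (Polynomial.aeval a q *ᵥ fun _ => (1 : ZMod p)) = 0 :=
    aeval_mulVec_eq_zero_of_two a z α _ lam₀ _ hz0 hα0 hzv hαv hlam hze hαe q hr
  have hqb : φ m * (Polynomial.aeval b' q *ᵥ fun _ => 1) j₀ = 0 := by
    -- When `p ∣ m` the factor `m` suffices; otherwise `q` annihilates `e` for `B` as well.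
    by_cases hm : φ m = 0
    · rw [hm, zero_mul]
    have hcharb : b'.charpoly = (Polynomial.X - Polynomial.C lam₀) *
        ((Polynomial.X - Polynomial.C (φ (lam1 A τ τ'))) * q) := by
      rw [hb, charpoly_map, hchar, ← charpoly_map, ← ha, hr]
    -- Row `i₀` of `U` is a `lam₀`-eigenvector of `B` modulo `p`.
    have hrow : (φ ∘ U.row i₀) ᵥ* b' = lam₀ • (φ ∘ U.row i₀) := by
      ext j
      obtain ⟨c, hc⟩ := hUcol j
      have h1 : (A * U) i₀ j = (U.row i₀ ᵥ* B) j := by rw [hAU]; rfl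
      have h3 : (A * U) i₀ j = (A *ᵥ U.col j) i₀ := rfl
      rw [hb, ← RingHom.map_vecMul, ← h1, h3, RingHom.map_mulVec, hc, ← ha, mulVec_smul, hz,
        smul_comm, ← hc]
      rfl
    have hrow0 : φ ∘ U.row i₀ ≠ 0 := fun h => hij ((hφ0 _).mp (congrFun h j₀))
    have hrowe : (φ ∘ U.row i₀) ⬝ᵥ (fun _ => 1) = 0 := by
      rw [← hone, ← RingHom.map_dotProduct]
      have h := congrFun hUe i₀
      change U.row i₀ ⬝ᵥ eVec (n + 2) = _ at h
      rw [h, hφ0]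
      exact ⟨m, by simp [eVec]⟩
    -- `g = m • Qᵀ α` is an integral `lam₁`-eigenvector of `B`.
    have hgU : alphaVec τ τ' ᵥ* U = (p : ℤ) • g := by
      ext j; exact hg j
    have hp0 : (p : ℤ) ≠ 0 := by exact_mod_cast hp.ne_zero
    have hαA : alphaVec τ τ' ᵥ* A = lam1 A τ τ' • alphaVec τ τ' := by
      rw [← mulVec_transpose, hA.symm.eq, mulVec_alphaVec hA hne htw]
    have hgB : g ᵥ* B = lam1 A τ τ' • g := by
      apply smul_right_injective _ hp0
      change (p : ℤ) • (g ᵥ* B) = (p : ℤ) • (lam1 A τ τ' • g)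
      rw [← smul_vecMul, ← hgU, vecMul_vecMul, ← hAU, ← vecMul_vecMul, hαA, smul_vecMul, hgU,
        smul_comm]
    have hge : g ⬝ᵥ eVec (n + 2) = 0 := by
      apply mul_left_cancel₀ hp0
      rw [← smul_eq_mul, ← smul_dotProduct, ← hgU, ← dotProduct_mulVec, hUe, dotProduct_smul,
        alphaVec_dotProduct hne]
      simp [eVec]
    have hgg : g ⬝ᵥ g = 2 * m ^ 2 := by
      apply mul_left_cancel₀ (pow_ne_zero 2 hp0)
      have h : ((p : ℤ) • g) ⬝ᵥ ((p : ℤ) • g) = 2 * (p * m) ^ 2 := by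
        rw [← hgU]
        nth_rewrite 2 [← mulVec_transpose]
        rw [← dotProduct_mulVec, mulVec_mulVec, hUU', smul_mulVec, one_mulVec, dotProduct_smul,
          alphaVec_dotProduct_self hne, smul_eq_mul, mul_comm]
      rw [smul_dotProduct, dotProduct_smul] at h
      simp only [smul_eq_mul] at h
      linear_combination h
    have hg0 : φ ∘ g ≠ 0 := by
      intro h
      have h1 : φ (g ⬝ᵥ g) = 0 := by rw [RingHom.map_dotProduct, h, zero_dotProduct]
      rw [hgg, map_mul, map_pow, map_ofNat] at h1
      exact mul_ne_zero h2 (pow_ne_zero 2 hm) h1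
    have hgv : (φ ∘ g) ᵥ* b' = φ (lam1 A τ τ') • (φ ∘ g) := by
      ext j
      rw [hb, ← RingHom.map_vecMul, hgB]
      simp
    have hgve : (φ ∘ g) ⬝ᵥ (fun _ => 1) = 0 := by
      rw [← hone, ← RingHom.map_dotProduct, hge, map_zero]
    rw [aeval_mulVec_eq_zero_of_two b' _ _ _ lam₀ _ hrow0 hg0 hrow hgv hlam hrowe hgve q hcharb]
    simp
  -- The solution is a correction `U.col j₀ - p • v'` of a column of `U`.
  let w : Fin (n + 2) → ℤ := fun j =>
    if (j : ℕ) = n + 1 then g j₀ else m * (B ^ (j : ℕ) *ᵥ eVec (n + 2)) j₀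
  have hHu : (hatW A τ τ')ᵀ *ᵥ U.col j₀ = (p : ℤ) • w := by
    ext j
    by_cases hj : (j : ℕ) = n + 1
    · have : ((hatW A τ τ')ᵀ *ᵥ U.col j₀) j = alphaVec τ τ' ⬝ᵥ U.col j₀ := by
        simp [hatW, mulVec, dotProduct, hj]
      rw [this, hg]; simp [w, hj]
    · have : ((hatW A τ τ')ᵀ *ᵥ U.col j₀) j = (A ^ (j : ℕ) *ᵥ eVec (n + 2)) ⬝ᵥ U.col j₀ := by
        simp [hatW, walkMatrix, mulVec, dotProduct, hj]
      rw [this, pow_mulVec_dotProduct_col hA.symm hB hAU hUTe]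
      simp [w, hj, mul_assoc]
  obtain ⟨v, hv⟩ := exists_hatWField_solution a b' α hadj₁ q hqdeg hq0 hqa (φ m) j₀ hqb (φ ∘ w)
    (by
      intro j hj
      simp only [Function.comp_apply, w, hj, if_false, map_mul]
      rw [hφ, cast_pow_mulVec_eVec])
  choose v' hv' using fun i => ZMod.intCast_surjective (v i)
  have hv'' : φ ∘ v' = v := funext hv'
  refine ⟨U.col j₀ - (p : ℤ) • v', ?_, ?_⟩
  · intro h
    apply hij
    have := h i₀
    simp only [Pi.sub_apply, Pi.smul_apply, smul_eq_mul] at this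
    exact (dvd_sub_left (dvd_mul_right _ _)).mp this
  · intro i
    rw [mulVec_sub, mulVec_smul, hHu, ← smul_sub, Pi.smul_apply, smul_eq_mul, sq]
    apply mul_dvd_mul_left
    rw [← hφ0, Pi.sub_apply, map_sub, RingHom.map_mulVec, transpose_map, hHmap, hv'', hv]
    simp

end AlmostControllableGraphs
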